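/- Let σ be the shift map on Σ = {1,…,m}^ℕ (m ≥ 2) with metric d(x,y) = 2^{−min{j ≥ 1 : x_j ≠ y_j}}, and let M_1,…,M_m be d×d complex matrices such that M_{i_1}⋯M_{i_n} ≠ 0 for every finite word (i_1,…,i_n), and such that there exist C > 0 and k ∈ ℕ with the property that for all finite words w, w' there is a word w̄ of length at most k with ‖M_w M_{w̄} M_{w'}‖ ≥ C·‖M_w‖·‖M_{w'}‖, where M_{(i_1,…,i_n)} = M_{i_1}⋯M_{i_n}. For t ≥ 0 let Φ^t = (φ^t_n)_n with φ^t_n(x) = t·log‖M_{x_1}⋯M_{x_n}‖ (each Φ^t is almost additive, hence asymptotically additive for σ). If the irregular set I(Φ^1,σ) is nonempty, then for every t ≥ 0, P_σ(⋂_{s>0} I(Φ^s,σ), Φ^t) = P_σ(Φ^t). -/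

import Mathlib

open MeasureTheory Filter Set
open scoped ENNReal

section Defs

variable {X : Type*} [MetricSpace X]

/-- The Bowen dynamical ball `B_n(x, ε)`. -/
def dynBall (f : X → X) (n : ℕ) (x : X) (ε : ℝ) : Set X :=
  {y | ∀ j < n, dist (f^[j] x) (f^[j] y) < ε}

/-- A sequence `Φ = (φ_n)` of continuous functions is asymptotically additive for `f`. -/
def AsympAdditive (f : X → X) (Φ : ℕ → X → ℝ) : Prop :=
  (∀ n, Continuous (Φ n)) ∧
    ∀ δ : ℝ, 0 < δ → ∃ ψ : X → ℝ, Continuous ψ ∧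
      Filter.limsup (fun n => (⨆ x : X, |Φ n x - birkhoffSum f ψ n x|) / n) Filter.atTop < δ

/-- Sum `Σ_{B_n(x,ε) ∈ Γ} exp(-αn + sup_{B_n(x,ε)} φ_n)` over a family of Bowen balls,
indexed by (center, order) pairs. -/
noncomputable def coverSum (f : X → X) (Φ : ℕ → X → ℝ) (α ε : ℝ) (Γ : Set (X × ℕ)) : ℝ≥0∞ :=
  ∑' p : Γ, ENNReal.ofReal
    (Real.exp (-α * ((p : X × ℕ).2 : ℝ) +
      sSup (Φ (p : X × ℕ).2 '' dynBall f (p : X × ℕ).2 (p : X × ℕ).1 ε)))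

/-- `M(Z, α, ε, N, Φ)`. -/
noncomputable def Mcal (f : X → X) (Φ : ℕ → X → ℝ) (Z : Set X) (α ε : ℝ) (N : ℕ) : ℝ≥0∞ :=
  ⨅ (Γ : Set (X × ℕ)) (_ : Γ.Countable) (_ : ∀ p ∈ Γ, N ≤ p.2)
    (_ : Z ⊆ ⋃ p ∈ Γ, dynBall f p.2 p.1 ε), coverSum f Φ α ε Γ

/-- `m(Z, α, ε, Φ) = lim_{N → ∞} M(Z, α, ε, N, Φ)`, a monotone limit. -/
noncomputable def mcal (f : X → X) (Φ : ℕ → X → ℝ) (Z : Set X) (α ε : ℝ) : ℝ≥0∞ :=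
  ⨆ N : ℕ, Mcal f Φ Z α ε N

/-- `P_f(Z, Φ, ε) = inf {α : m(Z, α, ε, Φ) = 0}`. -/
noncomputable def aaPressureAt (f : X → X) (Φ : ℕ → X → ℝ) (Z : Set X) (ε : ℝ) : EReal :=
  sInf ((fun a : ℝ => (a : EReal)) '' {a : ℝ | mcal f Φ Z a ε = 0})

/-- The asymptotically additive topological pressure `P_f(Z, Φ) = lim_{ε → 0} P_f(Z, Φ, ε)`. -/
noncomputable def aaPressure (f : X → X) (Φ : ℕ → X → ℝ) (Z : Set X) : EReal :=
  Filter.limsup (fun ε => aaPressureAt f Φ Z ε) (nhdsWithin (0 : ℝ) (Set.Ioi 0))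

/-- The `Φ`-irregular set `I(Φ, f)`. -/
def irregularSet (Φ : ℕ → X → ℝ) : Set X :=
  {x | ¬ ∃ c : ℝ, Filter.Tendsto (fun n => Φ n x / n) Filter.atTop (nhds c)}

/-- The `Φ`-regular set `R(Φ, f)`. -/
def regularSet (Φ : ℕ → X → ℝ) : Set X :=
  {x | ∃ c : ℝ, Filter.Tendsto (fun n => Φ n x / n) Filter.atTop (nhds c)}

/-- A blowup function. -/
def IsBlowupFun (g : ℕ → ℕ) : Prop :=
  Monotone g ∧ (∀ M : ℕ, ∃ n, M < g n) ∧ (∀ n, 0 < n → g n < n) ∧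
    Filter.Tendsto (fun n => (g n : ℝ) / n) Filter.atTop (nhds 0)

/-- The `g`-blowup `B_n(g; x, ε)` of the Bowen ball `B_n(x, ε)`. -/
def blowBall (f : X → X) (g : ℕ → ℕ) (n : ℕ) (x : X) (ε : ℝ) : Set X :=
  {y | ∃ Λ : Finset ℕ, Λ ⊆ Finset.range n ∧ (Finset.range n \ Λ).card ≤ g n ∧
    ∀ j ∈ Λ, dist (f^[j] x) (f^[j] y) ≤ ε}

/-- The `g`-almost product property. -/
def AlmostProductProperty (f : X → X) (g : ℕ → ℕ) : Prop :=
  ∃ m : ℝ → ℕ, (∀ ⦃a b : ℝ⦄, 0 < a → a ≤ b → m b ≤ m a) ∧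
    ∀ k : ℕ, 0 < k → ∀ (x : ℕ → X) (ε : ℕ → ℝ) (n : ℕ → ℕ),
      (∀ j < k, 0 < ε j) → (∀ j < k, m (ε j) ≤ n j) →
      (⋂ j ∈ Finset.range k,
        (f^[∑ i ∈ Finset.range j, n i]) ⁻¹' blowBall f g (n j) (x j) (ε j)).Nonempty

/-- `x` and `y` are `(δ, n, ε)`-separated. -/
def sepPair (f : X → X) (δ : ℝ) (n : ℕ) (ε : ℝ) (x y : X) : Prop :=
  δ * (n : ℝ) ≤ (((Finset.range n).filter fun j => ε < dist (f^[j] x) (f^[j] y)).card : ℝ)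

end Defs

section MeasureDefs

variable {X : Type*} [MetricSpace X] [MeasurableSpace X] [BorelSpace X]

/-- The set `M_f(X)` of `f`-invariant Borel probability measures. -/
def invProb (f : X → X) : Set (ProbabilityMeasure X) :=
  {μ | (μ : Measure X).map f = (μ : Measure X)}

/-- `Φ*(μ) = lim_n (1/n) ∫ φ_n dμ` (the limit exists for invariant `μ` and
asymptotically additive `Φ`; we encode it as a `limsup`). -/
noncomputable def phiStar (Φ : ℕ → X → ℝ) (μ : ProbabilityMeasure X) : ℝ :=
  Filter.limsup (fun n => (∫ x, Φ n x ∂(μ : Measure X)) / n) Filter.atTop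

/-- The empirical measure `E_n(x) = (1/n) Σ_{j<n} δ_{f^j x}` (junk value `δ_x` for `n = 0`). -/
noncomputable def empMeas (f : X → X) (x : X) (n : ℕ) : ProbabilityMeasure X :=
  if h : n = 0 then ⟨Measure.dirac x, inferInstance⟩
  else
    ⟨(n : ℝ≥0∞)⁻¹ • ∑ j ∈ Finset.range n, Measure.dirac (f^[j] x), by
      constructor
      simp only [Measure.smul_apply, smul_eq_mul, Measure.coe_finset_sum, Finset.sum_apply,
        measure_univ, Finset.sum_const, Finset.card_range, nsmul_eq_mul, mul_one]
      exact ENNReal.inv_mul_cancel (by exact_mod_cast h) (by simp)⟩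

/-- `M_x f`: the set of weak* limit points of the sequence of empirical measures of `x`. -/
def limitMeasures (f : X → X) (x : X) : Set (ProbabilityMeasure X) :=
  {μ | MapClusterPt μ Filter.atTop fun n => empMeas f x n}

/-- `G_K = {x : M_x f = K}`. -/
def genericPts (f : X → X) (K : Set (ProbabilityMeasure X)) : Set X :=
  {x | limitMeasures f x = K}

/-- `^K G = {x : M_x f ∩ K ≠ ∅}`. -/
def clusterIn (f : X → X) (K : Set (ProbabilityMeasure X)) : Set X :=
  {x | (limitMeasures f x ∩ K).Nonempty}

/-- A finite measurable partition of `X`. -/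
def IsFinPartition (P : Finset (Set X)) : Prop :=
  (∀ A ∈ P, MeasurableSet A) ∧ ⋃₀ (↑P : Set (Set X)) = Set.univ ∧
    (↑P : Set (Set X)).PairwiseDisjoint id

/-- The entropy `H_μ(⋁_{i<n} f^{-i} P)` of the `n`-th dynamical refinement of `P`. -/
noncomputable def joinEnt (f : X → X) (μ : Measure X) (P : Finset (Set X)) (n : ℕ) : ℝ :=
  ∑ g : Fin n → P, Real.negMulLog ((μ (⋂ i : Fin n, f^[(i : ℕ)] ⁻¹' (g i : Set X))).toReal)

/-- The Kolmogorov–Sinai entropy `h_μ(f)`. -/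
noncomputable def entropyKS (f : X → X) (μ : Measure X) : ℝ :=
  sSup {h : ℝ | ∃ P : Finset (Set X), IsFinPartition P ∧
    h = Filter.liminf (fun n => joinEnt f μ P n / n) Filter.atTop}

/-- The uniform separation property. -/
def UniformSeparation (f : X → X) : Prop :=
  ∀ η : ℝ, 0 < η → ∃ δs εs : ℝ, 0 < δs ∧ 0 < εs ∧
    ∀ μ : ProbabilityMeasure X, μ ∈ invProb f → Ergodic f (μ : Measure X) →
      ∀ F : Set (ProbabilityMeasure X), F ∈ nhds μ →
        ∃ n₀ : ℕ, ∀ n, n₀ ≤ n →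
          ∃ E : Finset X, (↑E : Set X) ⊆ {y | empMeas f y n ∈ F} ∧
            (↑E : Set X).Pairwise (sepPair f δs n εs) ∧
            (2 : ℝ) ^ ((n : ℝ) * (entropyKS f (μ : Measure X) - η)) ≤ (E.card : ℝ)

/-- `f` is sequentially saturated. -/
def SeqSaturated (f : X → X) : Prop :=
  ∀ Φ : ℕ → X → ℝ, AsympAdditive f Φ →
    ∀ K : Set (ProbabilityMeasure X), K ⊆ invProb f → IsCompact K → IsConnected K →
      aaPressure f Φ (genericPts f K) =
        sInf ((fun μ : ProbabilityMeasure X =>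
          ((entropyKS f (μ : Measure X) + phiStar Φ μ : ℝ) : EReal)) '' K)

end MeasureDefs

/-!
Fix an irregular point and let `ℓ w` be the logarithm of the norm of the matrix product along the
word `w`. Choose prefixes `p i` of the point, growing fast, along which `ℓ (p i)` divided by the
length does not converge. Cut an arbitrary sequence `z` into blocks of length `L`, insert some
`p i` between consecutive blocks and join all pieces by bridge words. The insertions are sparse:
the total size of those among the first `j` blocks is at most `j`, but it is comparable to `j`
whenever one has just been made. By quasi-multiplicativity, the limit `F z` is then irregular.

The bridge lengths are the only information about `z` lost in `F z`. Hence the points `z` for which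
`F z` lies in a given Bowen ball of order `n`, and for which the first `j` blocks with their
insertions fit into `n` letters, are covered by `(k + 1) ^ (2 * j)` cylinders. Passing to these
costs a factor `(k + 1) ^ 2 * exp D` per block with `D` independent of `L`, whereas raising the
exponent by `η` gains `exp (-η * L)` per block. For large `L` a cover of the irregular set thus
yields a cover of the whole space at the cost of an arbitrarily small increase of the exponent.
-/

open Asymptotics PiNat Topology

section Prefixes

variable {α : Type*}

/-- The word formed by the first `n` letters of the sequence `x`. -/
def wordPrefix (x : ℕ → α) (n : ℕ) : List α := List.ofFn fun i : Fin n => x i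

/-- The `s`-th of the consecutive blocks of length `L` into which the sequence `z` is cut. -/
def wordBlock (L : ℕ) (z : ℕ → α) (s : ℕ) : List α := wordPrefix (fun i => z (s * L + i)) L

@[simp]
theorem length_wordPrefix (x : ℕ → α) (n : ℕ) : (wordPrefix x n).length = n := List.length_ofFn

@[simp]
theorem length_wordBlock (L : ℕ) (z : ℕ → α) (s : ℕ) : (wordBlock L z s).length = L :=
  length_wordPrefix _ _

theorem wordPrefix_eq_iff {x y : ℕ → α} {n : ℕ} :
    wordPrefix y n = wordPrefix x n ↔ y ∈ cylinder x n := by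
  simp only [wordPrefix, List.ofFn_inj, funext_iff, Fin.forall_iff, mem_cylinder_iff]

theorem wordPrefix_add (x : ℕ → α) (p q : ℕ) :
    wordPrefix x (p + q) = wordPrefix x p ++ wordPrefix (fun i => x (p + i)) q := by
  simp only [wordPrefix, List.ofFn_add, Fin.val_castLE, Fin.val_natAdd]

theorem wordPrefix_prefix (x : ℕ → α) {p n : ℕ} (h : p ≤ n) :
    wordPrefix x p <+: wordPrefix x n := by
  obtain ⟨q, rfl⟩ := Nat.exists_eq_add_of_le h
  exact wordPrefix_add x p q ▸ List.prefix_append _ _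

theorem wordPrefix_succ_mul (L : ℕ) (z : ℕ → α) (s : ℕ) :
    wordPrefix z ((s + 1) * L) = wordPrefix z (s * L) ++ wordBlock L z s := by
  rw [Nat.succ_mul, wordPrefix_add, wordBlock]

theorem wordPrefix_mul_congr {L J : ℕ} {z z' : ℕ → α}
    (h : ∀ s < J, wordBlock L z s = wordBlock L z' s) :
    wordPrefix z (J * L) = wordPrefix z' (J * L) := by
  induction J with
  | zero => simp [wordPrefix]
  | succ J ih =>
    rw [wordPrefix_succ_mul, wordPrefix_succ_mul, h J J.lt_succ_self,
      ih fun s hs => h s (hs.trans J.lt_succ_self)]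

theorem prefix_of_prefix_succ {W : ℕ → List α} (hW : ∀ i, W i <+: W (i + 1)) {i j : ℕ}
    (h : i ≤ j) : W i <+: W j := by
  induction j, h using Nat.le_induction with
  | base => exact List.prefix_rfl
  | succ j _ ih => exact ih.trans (hW j)

/-- The sequence `x` is the limit of the words `W i` if each of them is a prefix of `x`. -/
def IsWordLimit (W : ℕ → List α) (x : ℕ → α) : Prop := ∀ i, wordPrefix x (W i).length = W i

theorem exists_isWordLimit {W : ℕ → List α} (hW : ∀ i, W i <+: W (i + 1))
    (hlen : Tendsto (fun i => (W i).length) atTop atTop) : ∃ x, IsWordLimit W x := by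
  replace hlen n : ∃ i, n < (W i).length := (hlen.eventually_gt_atTop n).exists
  choose idx hidx using hlen
  refine ⟨fun n => (W (idx n))[n]'(hidx n), fun i => List.ext_getElem (by simp) fun n _ hn => ?_⟩
  simp only [wordPrefix, List.getElem_ofFn]
  rcases le_total (idx n) i with h | h
  · exact (prefix_of_prefix_succ hW h).getElem (hidx n)
  · exact ((prefix_of_prefix_succ hW h).getElem hn).symm

end Prefixes

section Gluing

variable {α : Type*} (b : List α → List α → List α)

/-- The words obtained by appending `v 0, v 1, …` one after the other, where the word `b w w'` is
inserted whenever `w'` is appended to `w`. -/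
def gluedWord (v : ℕ → List α) : ℕ → List α
  | 0 => []
  | i + 1 => gluedWord v i ++ b (gluedWord v i) (v i) ++ v i

variable {b} {v v' : ℕ → List α}

theorem gluedWord_prefix_succ (i : ℕ) : gluedWord b v i <+: gluedWord b v (i + 1) := by
  rw [gluedWord, List.append_assoc]
  exact List.prefix_append _ _

theorem gluedWord_prefix {i j : ℕ} (h : i ≤ j) : gluedWord b v i <+: gluedWord b v j :=
  prefix_of_prefix_succ gluedWord_prefix_succ h

theorem length_gluedWord_succ (i : ℕ) : (gluedWord b v (i + 1)).length =
    (gluedWord b v i).length + (b (gluedWord b v i) (v i)).length + (v i).length := by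
  simp only [gluedWord, List.length_append]

theorem sum_length_le_length_gluedWord (j : ℕ) :
    ∑ i ∈ Finset.range j, (v i).length ≤ (gluedWord b v j).length := by
  induction j with
  | zero => simp
  | succ j ih => rw [Finset.sum_range_succ, length_gluedWord_succ]; lia

theorem length_gluedWord_le {k : ℕ} (hb : ∀ w w', (b w w').length ≤ k) (j : ℕ) :
    (gluedWord b v j).length ≤ ∑ i ∈ Finset.range j, (v i).length + j * k := by
  induction j with
  | zero => simp [gluedWord]
  | succ j ih =>
    have := hb (gluedWord b v j) (v j)
    rw [Finset.sum_range_succ, length_gluedWord_succ, Nat.succ_mul]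
    lia

theorem length_gluedWord_congr (hv : ∀ i, (v i).length = (v' i).length) {j : ℕ}
    (hgap : ∀ i < j, (b (gluedWord b v i) (v i)).length = (b (gluedWord b v' i) (v' i)).length) :
    (gluedWord b v j).length = (gluedWord b v' j).length := by
  induction j with
  | zero => rfl
  | succ j ih =>
    rw [length_gluedWord_succ, length_gluedWord_succ, hgap j j.lt_succ_self, hv,
      ih fun i hi => hgap i (hi.trans j.lt_succ_self)]

theorem eq_of_gluedWord_eq (hv : ∀ i, (v i).length = (v' i).length) {j : ℕ}
    (hgap : ∀ i < j, (b (gluedWord b v i) (v i)).length = (b (gluedWord b v' i) (v' i)).length)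
    (h : gluedWord b v j = gluedWord b v' j) : ∀ i < j, v i = v' i := by
  induction j with
  | zero => simp
  | succ j ih =>
    obtain ⟨hinit, hlast⟩ := List.append_inj' h (hv j)
    have hprev := (List.append_inj' hinit (hgap j j.lt_succ_self)).1
    intro i hi
    rcases Nat.lt_succ_iff_lt_or_eq.1 hi with hi | rfl
    · exact ih (fun i hi => hgap i (hi.trans j.lt_succ_self)) hprev i hi
    · exact hlast

end Gluing

section QuasiAdditive

variable {α : Type*} {ℓ : List α → ℝ} {b : List α → List α → List α} {k : ℕ} {K : ℝ}

/-- A function `ℓ` of words is quasi-additive if it is subadditive and, once a bridge word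
`b w w'` of length at most `k` is inserted between `w` and `w'`, superadditive up to the
constant `K`. -/
structure IsQuasiAdditive (ℓ : List α → ℝ) (b : List α → List α → List α) (k : ℕ) (K : ℝ) :
    Prop where
  map_nil : ℓ [] = 0
  map_append_le : ∀ w w', ℓ (w ++ w') ≤ ℓ w + ℓ w'
  length_bridge_le : ∀ w w', (b w w').length ≤ k
  add_le_map_bridge : ∀ w w', ℓ w + ℓ w' ≤ ℓ (w ++ b w w' ++ w') + K

namespace IsQuasiAdditive

theorem exists_le_mul_length [Finite α] (h : IsQuasiAdditive ℓ b k K) :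
    ∃ A, 0 ≤ A ∧ ∀ w, ℓ w ≤ A * w.length := by
  obtain ⟨A, hA⟩ := (Set.finite_range fun a => ℓ [a]).bddAbove
  refine ⟨|A|, abs_nonneg A, fun w => ?_⟩
  induction w with
  | nil => simp [h.map_nil]
  | cons a w ih =>
    have hletter : ℓ [a] ≤ |A| := (hA ⟨a, rfl⟩).trans (le_abs_self A)
    have hsplit := h.map_append_le [a] w
    rw [List.singleton_append] at hsplit
    rw [List.length_cons]
    push_cast
    linarith

theorem abs_map_bridge_sub_le (h : IsQuasiAdditive ℓ b k K) {A : ℝ} (hA0 : 0 ≤ A)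
    (hA : ∀ w, ℓ w ≤ A * w.length) (w w' : List α) :
    |ℓ (w ++ b w w' ++ w') - ℓ w - ℓ w'| ≤ |K| + A * k := by
  have hbridge : ℓ (b w w') ≤ A * k :=
    (hA _).trans (by gcongr; exact h.length_bridge_le w w')
  have hupper := h.map_append_le (w ++ b w w') w'
  have hupper' := h.map_append_le w (b w w')
  have hlower := h.add_le_map_bridge w w'
  have hAk : 0 ≤ A * k := by positivity
  rw [abs_le]
  constructor <;> linarith [le_abs_self K, abs_nonneg K]

theorem sum_le_map_gluedWord (h : IsQuasiAdditive ℓ b k K) (v : ℕ → List α) (j : ℕ) :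
    ∑ i ∈ Finset.range j, ℓ (v i) ≤ ℓ (gluedWord b v j) + j * K := by
  induction j with
  | zero => simp [gluedWord, h.map_nil]
  | succ j ih =>
    have := h.add_le_map_bridge (gluedWord b v j) (v j)
    rw [Finset.sum_range_succ, gluedWord]
    push_cast
    linarith

theorem map_wordPrefix_mul_le (h : IsQuasiAdditive ℓ b k K) (L : ℕ) (z : ℕ → α) (j : ℕ) :
    ℓ (wordPrefix z (j * L)) ≤ ∑ s ∈ Finset.range j, ℓ (wordBlock L z s) := by
  induction j with
  | zero => simp [wordPrefix, h.map_nil]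
  | succ j ih =>
    rw [Finset.sum_range_succ, wordPrefix_succ_mul]
    linarith [h.map_append_le (wordPrefix z (j * L)) (wordBlock L z j)]

end IsQuasiAdditive

theorem tendsto_div_iff_isLittleO_sub_mul {ι : Type*} {l : Filter ι} {a g : ι → ℝ} {c : ℝ}
    (hg : ∀ᶠ i in l, g i ≠ 0) :
    Tendsto (fun i => a i / g i) l (𝓝 c) ↔ (fun i => a i - c * g i) =o[l] g := by
  rw [isLittleO_iff_tendsto' (hg.mono fun i hi h0 => absurd h0 hi), ← tendsto_sub_nhds_zero_iff]
  refine tendsto_congr' (hg.mono fun i hi => ?_)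
  change a i / g i - c = (a i - c * g i) / g i
  rw [sub_div, mul_div_cancel_right₀ c hi]

theorem IsQuasiAdditive.isLittleO_of_tendsto_div [Finite α] (h : IsQuasiAdditive ℓ b k K)
    {v : ℕ → List α} {x : ℕ → α} (hx : IsWordLimit (gluedWord b v) x)
    (htop : Tendsto (fun i => (gluedWord b v i).length) atTop atTop)
    (hlin : (fun i => ((gluedWord b v i).length : ℝ)) =O[atTop] fun i => (i : ℝ)) {c : ℝ}
    (hc : Tendsto (fun n : ℕ => ℓ (wordPrefix x n) / n) atTop (𝓝 c)) :
    (fun i => ℓ (v i) - c * (v i).length) =o[atTop] fun i => (i : ℝ) := by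
  obtain ⟨A, hA0, hA⟩ := h.exists_le_mul_length
  set W := gluedWord b v
  have hne : ∀ᶠ n : ℕ in atTop, (n : ℝ) ≠ 0 :=
    (eventually_ne_atTop 0).mono fun n => Nat.cast_ne_zero.2
  have hW : (fun i => ℓ (W i) - c * (W i).length) =o[atTop] fun i => (i : ℝ) := by
    simpa only [Function.comp_def, hx _] using
      (((tendsto_div_iff_isLittleO_sub_mul hne).1 hc).comp_tendsto htop).trans_isBigO hlin
  have hconst (R : ℝ) : (fun _ : ℕ => R) =o[atTop] fun i : ℕ => (i : ℝ) :=
    isLittleO_const_left.2 <| .inr <| tendsto_norm_atTop_atTop.comp tendsto_natCast_atTop_atTop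
  have hsucc : (fun i : ℕ => ((i + 1 : ℕ) : ℝ)) =O[atTop] fun i : ℕ => (i : ℝ) := by
    simpa only [Nat.cast_add, Nat.cast_one] using (isBigO_refl _ _).add (hconst 1).isBigO
  have hW' : (fun i => ℓ (W (i + 1)) - c * (W (i + 1)).length) =o[atTop] fun i => (i : ℝ) :=
    (hW.comp_tendsto (tendsto_add_atTop_nat 1)).trans_isBigO hsucc
  have hjoin : (fun i => (ℓ (W (i + 1)) - ℓ (W i) - ℓ (v i)) - c * (b (W i) (v i)).length)
      =o[atTop] fun i => (i : ℝ) := by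
    refine (IsBigO.of_bound' (.of_forall fun i => ?_)).trans_isLittleO
      (hconst (|K| + A * k + |c| * k))
    have hgap : |c * ((b (W i) (v i)).length : ℝ)| ≤ |c| * k := by
      rw [abs_mul, Nat.abs_cast]
      gcongr
      exact h.length_bridge_le _ _
    exact (abs_sub _ _).trans <| (add_le_add (h.abs_map_bridge_sub_le hA0 hA _ _) hgap).trans
      (le_abs_self _)
  refine ((hW'.sub hW).sub hjoin).congr_left fun i => ?_
  rw [length_gluedWord_succ]
  push_cast
  ring

end QuasiAdditive

section SparseInsertions

theorem exists_growing_not_tendsto {E : Type*} [PseudoMetricSpace E] [CompleteSpace E] {e : ℕ → E}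
    (he : ¬ ∃ c, Tendsto e atTop (𝓝 c)) (D : ℕ → ℝ) :
    ∃ n : ℕ → ℕ, (∀ i, 0 < n i) ∧ (∀ i, D (n i) ≤ n (i + 1)) ∧
      ¬ ∃ c, Tendsto (fun i => e (n i)) atTop (𝓝 c) := by
  have hcauchy : ¬ CauchySeq e := fun h => he (cauchySeq_tendsto_of_complete h)
  simp only [Metric.cauchySeq_iff', not_forall, not_exists, not_lt] at hcauchy
  obtain ⟨ε, hε, hfar⟩ := hcauchy
  have hnext (i : ℕ) : ∃ j : ℕ, max 1 (D i) ≤ j ∧ ε / 2 ≤ dist (e j) (e i) := by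
    obtain ⟨N, hN⟩ := exists_nat_ge (max 1 (D i))
    obtain ⟨j, hj, hdist⟩ := hfar N
    rcases le_or_gt (ε / 2) (dist (e N) (e i)) with hNi | hNi
    · exact ⟨N, hN, hNi⟩
    · exact ⟨j, hN.trans (Nat.cast_le.2 hj), by linarith [dist_triangle_right (e j) (e N) (e i)]⟩
  choose next hnext hjump using hnext
  set n : ℕ → ℕ := fun i => next^[i] 1
  have hn (i : ℕ) : n (i + 1) = next (n i) := Function.iterate_succ_apply' next i 1
  refine ⟨n, fun i => ?_, fun i => hn i ▸ (le_max_right _ _).trans (hnext _), fun ⟨c, hc⟩ => ?_⟩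
  · cases i with
    | zero => exact one_pos
    | succ i => exact hn i ▸ Nat.one_le_cast.1 ((le_max_left _ _).trans (hnext (n i)))
  · have hlim := (hc.comp (tendsto_add_atTop_nat 1)).dist hc
    have hge := ge_of_tendsto' hlim fun i => hn i ▸ hjump (n i)
    rw [dist_self] at hge
    linarith

theorem exists_sparse_placement {E : Type*} {cost : E → ℝ} {p : ℕ → E} {e₀ : E} (h0 : cost e₀ = 0)
    (hone : 1 ≤ cost (p 0)) (hgrow : ∀ i, 2 * cost (p i) ≤ cost (p (i + 1))) :
    ∃ (S : ℕ → ℕ) (u : ℕ → E), StrictMono S ∧ (∀ i, u (S i) = p i) ∧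
      (∀ i, (S i : ℝ) ≤ 3 * cost (p i)) ∧ ∀ j, ∑ s ∈ Finset.range j, cost (u s) ≤ j := by
  have hcost (i : ℕ) : 1 ≤ cost (p i) := by
    induction i with
    | zero => exact hone
    | succ i ih => linarith [hgrow i]
  set total : ℕ → ℝ := fun i => ∑ i' ∈ Finset.range (i + 1), cost (p i')
  have htotal (i : ℕ) : total (i + 1) = total i + cost (p (i + 1)) := Finset.sum_range_succ _ _
  have hpos (i : ℕ) : 0 ≤ total i := Finset.sum_nonneg fun i' _ => zero_le_one.trans (hcost i')
  have hupper (i : ℕ) : total i ≤ 2 * cost (p i) := by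
    induction i with
    | zero => simp only [total, zero_add, Finset.sum_range_one]; linarith
    | succ i ih => linarith [htotal i, hgrow i]
  set S : ℕ → ℕ := fun i => ⌈total i⌉₊
  have hS : StrictMono S := strictMono_nat_of_lt_succ fun i => by
    rw [← Nat.add_one_le_iff, ← Nat.ceil_add_one (hpos i)]
    exact Nat.ceil_mono (by linarith [htotal i, hcost (i + 1)])
  set u := Function.extend S p fun _ => e₀
  have hu (i : ℕ) : u (S i) = p i := hS.injective.extend_apply _ _ i
  refine ⟨S, u, hS, hu, fun i => ?_, fun j => ?_⟩
  · linarith [Nat.ceil_lt_add_one (hpos i), hupper i, hcost i]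
  · rw [← Finset.sum_preimage S (Finset.range j) hS.injective.injOn (fun s => cost (u s))
      fun s _ hs => by rw [← h0]; exact congrArg cost (Function.extend_apply' _ _ _ hs)]
    set T := (Finset.range j).preimage S hS.injective.injOn
    rcases T.eq_empty_or_nonempty with hT | hT
    · simp [hT]
    have hlast : S (T.max' hT) ≤ j :=
      (Finset.mem_range.1 (Finset.mem_preimage.1 (T.max'_mem hT))).le
    calc ∑ i ∈ T, cost (u (S i)) = ∑ i ∈ T, cost (p i) := by simp only [hu]
      _ ≤ total (T.max' hT) := Finset.sum_le_sum_of_subset_of_nonneg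
        (fun i hi => Finset.mem_range_succ_iff.2 (T.le_max' i hi))
        fun i _ _ => zero_le_one.trans (hcost i)
      _ ≤ S (T.max' hT) := Nat.le_ceil _
      _ ≤ j := Nat.cast_le.2 hlast

/-- A sequence of words is sparse, relative to the function `ℓ` of words, if the lengths and the
values of `ℓ` accumulated by its first `j` terms are at most `j`. -/
def IsSparse {α : Type*} (ℓ : List α → ℝ) (u : ℕ → List α) : Prop :=
  ∀ j, ∑ s ∈ Finset.range j, (((u s).length : ℝ) + |ℓ (u s)|) ≤ j

theorem exists_isSparse_not_isLittleO {α : Type*} {ℓ : List α → ℝ} (h0 : ℓ [] = 0) {x : ℕ → α}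
    (hx : ¬ ∃ c, Tendsto (fun n : ℕ => ℓ (wordPrefix x n) / n) atTop (𝓝 c)) :
    ∃ u, IsSparse ℓ u ∧ ∀ c : ℝ,
      ¬ (fun s => ℓ (u s) - c * (u s).length) =o[atTop] fun s => (s : ℝ) := by
  set cost : List α → ℝ := fun w => w.length + |ℓ w|
  obtain ⟨n, hpos, hgrow, hn⟩ := exists_growing_not_tendsto hx fun n => 2 * cost (wordPrefix x n)
  have hle (i : ℕ) : (n i : ℝ) ≤ cost (wordPrefix x (n i)) := by simp [cost]
  obtain ⟨S, u, hS, hu, hS_le, hsparse⟩ :=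
    exists_sparse_placement (cost := cost) (p := fun i => wordPrefix x (n i)) (e₀ := [])
      (by simp [cost, h0]) ((Nat.one_le_cast.2 (hpos 0)).trans (hle 0))
      fun i => (hgrow i).trans (hle (i + 1))
  refine ⟨u, hsparse, fun c hc => hn ⟨c, ?_⟩⟩
  rw [tendsto_div_iff_isLittleO_sub_mul (.of_forall fun i => Nat.cast_ne_zero.2 (hpos i).ne')]
  set defect : ℕ → ℝ := fun i => ℓ (wordPrefix x (n i)) - c * n i
  have hS_isBigO : (fun i => (S i : ℝ)) =O[atTop] fun i => cost (wordPrefix x (n i)) :=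
    IsBigO.of_bound 3 (.of_forall fun i => by
      rw [Real.norm_natCast]
      exact (hS_le i).trans (mul_le_mul_of_nonneg_left (le_abs_self _) zero_le_three))
  have hdefect : defect =o[atTop] fun i => cost (wordPrefix x (n i)) := by
    simpa only [Function.comp_def, hu, length_wordPrefix, defect] using
      (hc.comp_tendsto hS.tendsto_atTop).trans_isBigO hS_isBigO
  have hrest : (fun i => cost (wordPrefix x (n i)) - |defect i|) =O[atTop] fun i => (n i : ℝ) := by
    refine IsBigO.of_bound (1 + |c|) (.of_forall fun i => ?_)
    have habs := abs_abs_sub_abs_le (ℓ (wordPrefix x (n i))) (defect i)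
    rw [sub_sub_cancel, abs_mul, Nat.abs_cast] at habs
    rw [Real.norm_eq_abs, Real.norm_natCast, add_mul, one_mul]
    simp only [cost, length_wordPrefix, add_sub_assoc]
    exact (abs_add_le _ _).trans (add_le_add (Nat.abs_cast _).le habs)
  exact (hdefect.trans_isBigO (hdefect.norm_left.right_isBigO_sub)).trans_isBigO hrest

end SparseInsertions

section InsertionChain

variable {α : Type*}

/-- The sequence of words `B 0, u 0, B 1, u 1, …`. -/
def interleave (B u : ℕ → List α) (i : ℕ) : List α := if Even i then B (i / 2) else u (i / 2)

theorem interleave_two_mul (B u : ℕ → List α) (s : ℕ) : interleave B u (2 * s) = B s := by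
  simp [interleave]

theorem interleave_two_mul_add_one (B u : ℕ → List α) (s : ℕ) :
    interleave B u (2 * s + 1) = u s := by
  rw [interleave, if_neg (by simp), show (2 * s + 1) / 2 = s by lia]

theorem sum_interleave {M : Type*} [AddCommMonoid M] (f : List α → M) (B u : ℕ → List α) (j : ℕ) :
    ∑ i ∈ Finset.range (2 * j), f (interleave B u i) =
      ∑ s ∈ Finset.range j, (f (B s) + f (u s)) := by
  induction j with
  | zero => rfl
  | succ j ih =>
    rw [Nat.mul_succ, Finset.sum_range_succ, Finset.sum_range_succ, Finset.sum_range_succ, ih,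
      interleave_two_mul, interleave_two_mul_add_one, add_assoc]

/-- The chain of words that alternates the length-`L` blocks of `z` with the words `u s`, joined by
the bridge words `b`. Its entries of index `2 * s` are those after `s` complete rounds. -/
def insertionChain (b : List α → List α → List α) (u : ℕ → List α) (L : ℕ) (z : ℕ → α) :
    ℕ → List α :=
  gluedWord b (interleave (wordBlock L z) u)

variable {b : List α → List α → List α} {u : ℕ → List α} {ℓ : List α → ℝ} {k L : ℕ} {z z' : ℕ → α}

theorem length_interleave_wordBlock (L : ℕ) (z z' : ℕ → α) (u : ℕ → List α) (i : ℕ) :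
    (interleave (wordBlock L z) u i).length = (interleave (wordBlock L z') u i).length := by
  unfold interleave
  split_ifs <;> simp

theorem mul_le_length_insertionChain (s : ℕ) : s * L ≤ (insertionChain b u L z (2 * s)).length := by
  refine le_trans ?_ (sum_length_le_length_gluedWord (2 * s))
  rw [sum_interleave]
  simp only [length_wordBlock, Finset.sum_add_distrib, Finset.sum_const, Finset.card_range,
    smul_eq_mul]
  exact Nat.le_add_right _ _

theorem IsSparse.sum_length_le (hu : IsSparse ℓ u) (j : ℕ) :
    ∑ s ∈ Finset.range j, (u s).length ≤ j := by
  have := (Finset.sum_le_sum fun s _ => le_add_of_nonneg_right (abs_nonneg (ℓ (u s)))).trans (hu j)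
  exact_mod_cast this

theorem IsSparse.length_insertionChain_le (hu : IsSparse ℓ u) (hb : ∀ w w', (b w w').length ≤ k)
    (s : ℕ) : (insertionChain b u L z (2 * s)).length ≤ s * (L + 2 * k + 1) := by
  refine (length_gluedWord_le hb (2 * s)).trans ?_
  rw [sum_interleave]
  simp only [length_wordBlock, Finset.sum_add_distrib, Finset.sum_const, Finset.card_range,
    smul_eq_mul]
  linarith [hu.sum_length_le s]

theorem tendsto_length_insertionChain (hL : 0 < L) :
    Tendsto (fun i => (insertionChain b u L z i).length) atTop atTop := by
  refine tendsto_atTop_mono (fun i => ?_) (Nat.tendsto_div_const_atTop two_ne_zero)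
  calc i / 2 ≤ i / 2 * L := Nat.le_mul_of_pos_right _ hL
    _ ≤ (insertionChain b u L z (2 * (i / 2))).length := mul_le_length_insertionChain _
    _ ≤ (insertionChain b u L z i).length := (gluedWord_prefix (Nat.mul_div_le i 2)).length_le

theorem IsSparse.isBigO_length_insertionChain (hu : IsSparse ℓ u)
    (hb : ∀ w w', (b w w').length ≤ k) :
    (fun i => ((insertionChain b u L z i).length : ℝ)) =O[atTop] fun i => (i : ℝ) := by
  refine IsBigO.of_bound (L + 2 * k + 1 : ℕ) (.of_forall fun i => ?_)
  rw [Real.norm_natCast, Real.norm_natCast, ← Nat.cast_mul, Nat.cast_le, mul_comm]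
  calc (insertionChain b u L z i).length
    _ ≤ (insertionChain b u L z (2 * i)).length := (gluedWord_prefix (by lia)).length_le
    _ ≤ i * (L + 2 * k + 1) := hu.length_insertionChain_le hb i

theorem exists_isWordLimit_insertionChain (b : List α → List α → List α) (u : ℕ → List α)
    (hL : 0 < L) (z : ℕ → α) : ∃ x, IsWordLimit (insertionChain b u L z) x :=
  exists_isWordLimit gluedWord_prefix_succ (tendsto_length_insertionChain hL)

theorem exists_length_insertionChain_between (hL : 0 < L) {n : ℕ}
    (hn : (insertionChain b u L z 2).length ≤ n) :
    ∃ j, (insertionChain b u L z (2 * (j + 1))).length ≤ n ∧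
      n < (insertionChain b u L z (2 * (j + 2))).length := by
  have hrounds : Tendsto (fun j => 2 * (j + 1)) atTop atTop :=
    (tendsto_add_atTop_nat 1).const_mul_atTop' two_pos
  simpa only [not_lt] using Nat.exists_not_and_succ_of_not_zero_of_exists
    (p := fun j => n < (insertionChain b u L z (2 * (j + 1))).length) hn.not_gt
    (((tendsto_length_insertionChain hL).comp hrounds).eventually_gt_atTop n).exists

theorem mem_cylinder_of_length_gap_eq {j : ℕ} {w : List α}
    (hz : insertionChain b u L z (2 * j) <+: w)
    (hz' : insertionChain b u L z' (2 * j) <+: w)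
    (hgap : ∀ i < 2 * j,
      (b (insertionChain b u L z i) (interleave (wordBlock L z) u i)).length =
        (b (insertionChain b u L z' i) (interleave (wordBlock L z') u i)).length) :
    z ∈ cylinder z' (j * L) := by
  have hv := length_interleave_wordBlock L z z' u
  have hchain := List.IsPrefix.eq_of_length (List.prefix_of_prefix_length_le hz hz'
    (length_gluedWord_congr hv hgap).le) (length_gluedWord_congr hv hgap)
  have hpieces := eq_of_gluedWord_eq hv hgap hchain
  refine wordPrefix_eq_iff.1 (wordPrefix_mul_congr fun s hs => ?_)
  simpa only [interleave_two_mul] using hpieces (2 * s) (by lia)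

theorem exists_finset_cover_cylinder (hb : ∀ w w', (b w w').length ≤ k) (u : ℕ → List α) (L : ℕ)
    {j : ℕ} {w : List α} {S : Set (ℕ → α)} (hS : ∀ z ∈ S, insertionChain b u L z (2 * j) <+: w) :
    ∃ E : Finset (ℕ → α), ↑E ⊆ S ∧ E.card ≤ (k + 1) ^ (2 * j) ∧
      S ⊆ ⋃ e ∈ E, cylinder e (j * L) := by
  let gaps (z : ℕ → α) (i : Fin (2 * j)) : Fin (k + 1) :=
    ⟨(b (insertionChain b u L z i) (interleave (wordBlock L z) u i)).length,
      Nat.lt_succ_of_le (hb _ _)⟩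
  obtain ⟨E, hES, hbij⟩ := exists_subset_bijOn S gaps
  have hfin : E.Finite := Finite.of_injOn (mapsTo_univ _ _) hbij.injOn finite_univ
  refine ⟨hfin.toFinset, by rwa [hfin.coe_toFinset], ?_, fun z hz => ?_⟩
  · have hcard := Finset.card_le_card_of_injOn (s := hfin.toFinset) (t := Finset.univ) gaps
      (fun _ _ => Finset.mem_coe.2 (Finset.mem_univ _)) (by simpa using hbij.injOn)
    simpa using hcard
  · obtain ⟨e, he, hgaps⟩ := hbij.surjOn (mem_image_of_mem gaps hz)
    refine mem_iUnion₂.2 ⟨e, hfin.mem_toFinset.2 he, ?_⟩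
    exact mem_cylinder_of_length_gap_eq (hS z hz) (hS e (hES he)) fun i hi =>
      (Fin.ext_iff.1 (congrFun hgaps ⟨i, hi⟩)).symm

namespace IsQuasiAdditive

variable {K : ℝ} {x : ℕ → α}

theorem not_tendsto_of_isWordLimit_insertionChain [Finite α] (h : IsQuasiAdditive ℓ b k K)
    (hu : IsSparse ℓ u)
    (hirr : ∀ c : ℝ, ¬ (fun s => ℓ (u s) - c * (u s).length) =o[atTop] fun s => (s : ℝ))
    (hL : 0 < L) (hx : IsWordLimit (insertionChain b u L z) x) :
    ¬ ∃ c, Tendsto (fun n : ℕ => ℓ (wordPrefix x n) / n) atTop (𝓝 c) := fun ⟨c, hc⟩ => by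
  have hodd : Tendsto (fun s => 2 * s + 1) atTop atTop :=
    tendsto_atTop_mono (fun s => show s ≤ 2 * s + 1 by lia) tendsto_id
  have hpieces := (h.isLittleO_of_tendsto_div hx (tendsto_length_insertionChain hL)
    (hu.isBigO_length_insertionChain h.length_bridge_le) hc).comp_tendsto hodd
  simp only [Function.comp_def, interleave_two_mul_add_one] at hpieces
  refine hirr c (hpieces.trans_isBigO (IsBigO.of_bound 3 ?_))
  filter_upwards [eventually_ge_atTop 1] with s hs
  rw [Real.norm_natCast, Real.norm_natCast]
  exact_mod_cast (by lia : 2 * s + 1 ≤ 3 * s)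

theorem sum_wordBlock_le_map_insertionChain (h : IsQuasiAdditive ℓ b k K) (hu : IsSparse ℓ u)
    (L : ℕ) (z : ℕ → α) (j : ℕ) :
    ∑ s ∈ Finset.range j, ℓ (wordBlock L z s) ≤
      ℓ (insertionChain b u L z (2 * j)) + j * (2 * K + 1) := by
  have hchain := h.sum_le_map_gluedWord (interleave (wordBlock L z) u) (2 * j)
  rw [sum_interleave, Finset.sum_add_distrib] at hchain
  have hinsert : -(j : ℝ) ≤ ∑ s ∈ Finset.range j, ℓ (u s) := by
    rw [neg_le, ← Finset.sum_neg_distrib]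
    exact (Finset.sum_le_sum fun s _ => (neg_le_abs _).trans
      (le_add_of_nonneg_left (Nat.cast_nonneg _))).trans (hu j)
  unfold insertionChain
  push_cast at hchain
  linarith

theorem map_wordPrefix_le_of_isWordLimit (h : IsQuasiAdditive ℓ b k K) (hu : IsSparse ℓ u)
    {A c : ℝ} (hA0 : 0 ≤ A) (hA : ∀ w, ℓ w ≤ A * w.length) (hc : ∀ w, w.length = L → c ≤ ℓ w)
    (hx : IsWordLimit (insertionChain b u L z) x) {n j : ℕ} (hj : j * L ≤ n)
    (hn : n < (insertionChain b u L z (2 * (j + 2))).length) :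
    ℓ (wordPrefix z (j * L)) ≤ ℓ (wordPrefix x n) + 2 * (A * L - c) +
      (j + 2) * (A * (2 * k + 1) + 2 * K + 1) := by
  have hblocks := h.map_wordPrefix_mul_le L z j
  have hblock (s : ℕ) := hc (wordBlock L z s) (length_wordBlock L z s)
  have hchain := h.sum_wordBlock_le_map_insertionChain hu L z (j + 2)
  rw [Finset.sum_range_succ, Finset.sum_range_succ] at hchain
  obtain ⟨q, hq⟩ := Nat.exists_eq_add_of_lt hn
  have hq_le : q + 1 ≤ 2 * L + (j + 2) * (2 * k + 1) := by
    have hupper := hu.length_insertionChain_le (L := L) (z := z) h.length_bridge_le (j + 2)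
    rw [hq] at hupper
    lia
  have hrest : ℓ (insertionChain b u L z (2 * (j + 2))) ≤
      ℓ (wordPrefix x n) + A * (2 * L + (j + 2) * (2 * k + 1)) := by
    rw [← hx, hq, add_assoc, wordPrefix_add]
    refine (h.map_append_le _ _).trans (add_le_add_right ((hA _).trans ?_) _)
    rw [length_wordPrefix]
    gcongr
    exact_mod_cast hq_le
  push_cast at hchain
  linarith [hblock j, hblock (j + 1)]

theorem exists_exponent_bound [Finite α] (h : IsQuasiAdditive ℓ b k K) (hu : IsSparse ℓ u) (a : ℝ)
    {t : ℝ} (ht : 0 ≤ t) :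
    ∃ D : ℝ, ∀ L, ∃ E : ℝ, ∀ z x n j, IsWordLimit (insertionChain b u L z) x →
      (insertionChain b u L z (2 * j)).length ≤ n →
      n < (insertionChain b u L z (2 * (j + 2))).length →
      -a * (j * L : ℕ) + t * ℓ (wordPrefix z (j * L)) ≤
        -a * n + t * ℓ (wordPrefix x n) + E + j * D := by
  obtain ⟨A, hA0, hA⟩ := h.exists_le_mul_length
  set D := |a| * (2 * k + 1) + t * (A * (2 * k + 1) + 2 * K + 1) with hD
  refine ⟨D, fun L => ?_⟩
  obtain ⟨c, hc⟩ := ((List.finite_length_eq α L).image ℓ).bddBelow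
  refine ⟨2 * (|a| * L + t * (A * L - c) + D), fun z x n j hx hj hn => ?_⟩
  have hlower : j * L ≤ n := (mul_le_length_insertionChain j).trans hj
  have hℓ := mul_le_mul_of_nonneg_left (h.map_wordPrefix_le_of_isWordLimit hu hA0 hA
    (fun w hw => hc ⟨w, hw, rfl⟩) hx hlower hn) ht
  have hlength : a * (n - (j * L : ℕ)) ≤ |a| * (2 * L + (j + 2) * (2 * k + 1)) := by
    have hupper := hn.le.trans
      (hu.length_insertionChain_le (L := L) (z := z) h.length_bridge_le (j + 2))
    refine mul_le_mul (le_abs_self a) ?_ (sub_nonneg.2 (Nat.cast_le.2 hlower)) (abs_nonneg a)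
    rw [sub_le_iff_le_add]
    exact_mod_cast (by lia : n ≤ 2 * L + (j + 2) * (2 * k + 1) + j * L)
  linear_combination hℓ + hlength + (j + 2) * hD

end IsQuasiAdditive

end InsertionChain

section Pressure

variable {X Y : Type*} [MetricSpace X] [MetricSpace Y] {f : X → X} {g : Y → Y} {Φ : ℕ → X → ℝ}
  {Ψ : ℕ → Y → ℝ} {Z Z' : Set X} {a a' ε ε' : ℝ} {N : ℕ}

/-- The weight `exp (-α n + sup φ_n)` of the Bowen ball with center `p.1` and order `p.2 = n`. -/
noncomputable def ballWeight (f : X → X) (Φ : ℕ → X → ℝ) (α ε : ℝ) (p : X × ℕ) : ℝ≥0∞ :=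
  ENNReal.ofReal (Real.exp (-α * (p.2 : ℝ) + sSup (Φ p.2 '' dynBall f p.2 p.1 ε)))

theorem coverSum_eq_tsum_ballWeight (Γ : Set (X × ℕ)) :
    coverSum f Φ a ε Γ = ∑' p : Γ, ballWeight f Φ a ε p := rfl

theorem Mcal_le_coverSum {Γ : Set (X × ℕ)} (hΓ : Γ.Countable) (hN : ∀ p ∈ Γ, N ≤ p.2)
    (hZ : Z ⊆ ⋃ p ∈ Γ, dynBall f p.2 p.1 ε) : Mcal f Φ Z a ε N ≤ coverSum f Φ a ε Γ :=
  iInf₂_le_of_le Γ hΓ (iInf₂_le hN hZ)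

theorem Mcal_mono (h : Z ⊆ Z') : Mcal f Φ Z a ε N ≤ Mcal f Φ Z' a ε N :=
  le_iInf₂ fun _ hΓ => le_iInf₂ fun hN hZ' => Mcal_le_coverSum hΓ hN (h.trans hZ')

theorem exists_coverSum_lt {c : ℝ≥0∞} (h : Mcal f Φ Z a ε N < c) :
    ∃ Γ : Set (X × ℕ), Γ.Countable ∧ (∀ p ∈ Γ, N ≤ p.2) ∧ (Z ⊆ ⋃ p ∈ Γ, dynBall f p.2 p.1 ε) ∧
      coverSum f Φ a ε Γ < c := by
  simpa only [Mcal, iInf_lt_iff, exists_prop] using h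

theorem Mcal_iUnion_le {ι : Type*} [Countable ι] (A : ι → Set X) :
    Mcal f Φ (⋃ i, A i) a ε N ≤ ∑' i, Mcal f Φ (A i) a ε N := by
  refine ENNReal.le_of_forall_pos_le_add fun δ hδ hfin => ?_
  obtain ⟨δ', hδ', hsum⟩ := ENNReal.exists_pos_sum_of_countable (ENNReal.coe_ne_zero.2 hδ.ne') ι
  have hcover (i : ι) := exists_coverSum_lt
    (ENNReal.lt_add_right (ENNReal.ne_top_of_tsum_ne_top hfin.ne i)
      (ENNReal.coe_ne_zero.2 (hδ' i).ne'))
  choose Γ hΓ hN hA hlt using hcover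
  calc Mcal f Φ (⋃ i, A i) a ε N
    _ ≤ coverSum f Φ a ε (⋃ i, Γ i) := by
      refine Mcal_le_coverSum (countable_iUnion hΓ) (fun p hp => ?_) (iUnion_subset fun i => ?_)
      · obtain ⟨i, hi⟩ := mem_iUnion.1 hp
        exact hN i p hi
      · exact (hA i).trans (biUnion_subset_biUnion_left (subset_iUnion Γ i))
    _ ≤ ∑' i, coverSum f Φ a ε (Γ i) := ENNReal.tsum_iUnion_le_tsum (ballWeight f Φ a ε) Γ
    _ ≤ ∑' i, (Mcal f Φ (A i) a ε N + δ' i) := ENNReal.tsum_le_tsum fun i => (hlt i).le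
    _ ≤ ∑' i, Mcal f Φ (A i) a ε N + δ := by
      rw [ENNReal.tsum_add]
      gcongr

/-- The set function `Z ↦ M(Z, α, ε, N, Φ)`, as an outer measure. -/
noncomputable def bowenOuterMeasure (f : X → X) (Φ : ℕ → X → ℝ) (α ε : ℝ) (N : ℕ) :
    OuterMeasure X where
  measureOf Z := Mcal f Φ Z α ε N
  empty := nonpos_iff_eq_zero.1 <| (Mcal_le_coverSum (Γ := ∅) (by simp) (by simp) (by simp)).trans
    (by simp [coverSum])
  mono := Mcal_mono
  iUnion_nat A _ := Mcal_iUnion_le A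

theorem bowenOuterMeasure_dynBall_le {p : X × ℕ} (hp : N ≤ p.2) :
    bowenOuterMeasure f Φ a ε N (dynBall f p.2 p.1 ε) ≤ ballWeight f Φ a ε p :=
  (Mcal_le_coverSum (countable_singleton p) (by simpa) (by simp)).trans_eq
    (by rw [coverSum_eq_tsum_ballWeight, tsum_singleton p (ballWeight f Φ a ε)])

theorem mcal_eq_zero_of_preimage {F : Y → X} {Z' : Set Y} {B : ℝ≥0∞} (hF : MapsTo F Z' Z)
    (hB : B ≠ ⊤) (hball : ∀ N, ∃ N', ∀ p : X × ℕ, N' ≤ p.2 →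
      bowenOuterMeasure g Ψ a' ε' N (F ⁻¹' dynBall f p.2 p.1 ε) ≤ ballWeight f Φ a ε p * B)
    (hZ : mcal f Φ Z a ε = 0) : mcal g Ψ Z' a' ε' = 0 := by
  refine ENNReal.iSup_eq_zero.2 fun N => ?_
  obtain ⟨N', hN'⟩ := hball N
  have hle : Mcal g Ψ Z' a' ε' N / B ≤ Mcal f Φ Z a ε N' :=
    le_iInf₂ fun Γ hΓ => le_iInf₂ fun hN hcover => ENNReal.div_le_of_le_mul <|
      calc bowenOuterMeasure g Ψ a' ε' N Z'
        _ ≤ bowenOuterMeasure g Ψ a' ε' N (⋃ p ∈ Γ, F ⁻¹' dynBall f p.2 p.1 ε) := by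
          refine measure_mono fun z hz => ?_
          simpa only [mem_iUnion, mem_preimage] using hcover (hF hz)
        _ ≤ ∑' p : Γ, bowenOuterMeasure g Ψ a' ε' N (F ⁻¹' dynBall f p.1.2 p.1.1 ε) :=
          measure_biUnion_le _ hΓ _
        _ ≤ ∑' p : Γ, ballWeight f Φ a ε p * B :=
          ENNReal.tsum_le_tsum fun p => hN' p (hN p p.2)
        _ = coverSum f Φ a ε Γ * B := by rw [ENNReal.tsum_mul_right, coverSum_eq_tsum_ballWeight]
  rw [ENNReal.iSup_eq_zero.1 hZ N', nonpos_iff_eq_zero, ENNReal.div_eq_zero_iff] at hle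
  exact hle.resolve_right hB

theorem aaPressureAt_mono (h : Z ⊆ Z') : aaPressureAt f Φ Z ε ≤ aaPressureAt f Φ Z' ε :=
  sInf_le_sInf (image_mono fun _ ha => nonpos_iff_eq_zero.1 <|
    (iSup_mono fun _ => Mcal_mono h).trans_eq ha)

theorem aaPressureAt_le_of_forall_lt {Z' : Set Y}
    (h : ∀ a r, a < r → mcal f Φ Z a ε = 0 → mcal g Ψ Z' r ε' = 0) :
    aaPressureAt g Ψ Z' ε' ≤ aaPressureAt f Φ Z ε := by
  refine le_sInf ?_
  rintro _ ⟨a, ha, rfl⟩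
  exact EReal.le_of_forall_lt_iff_le.1 fun r hr =>
    sInf_le ⟨r, h a r (EReal.coe_lt_coe_iff.1 hr) ha, rfl⟩

end Pressure

section Shift

variable {α : Type*}

/-- The left shift on sequences. -/
def leftShift (x : ℕ → α) : ℕ → α := fun j => x (j + 1)

theorem leftShift_iterate (j : ℕ) (x : ℕ → α) : leftShift^[j] x = fun i => x (i + j) := by
  induction j with
  | zero => rfl
  | succ j ih =>
    rw [Function.iterate_succ_apply', ih]
    funext i
    rw [leftShift, Nat.add_right_comm, Nat.add_assoc]

variable [MetricSpace (ℕ → α)] {ℓ : List α → ℝ} {a t ε : ℝ} {q : ℕ}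

/-- A metric on sequences is a cylinder metric if points close enough share their first letter and
points sharing a long enough prefix are uniformly close, so that the Bowen balls of the shift are
comparable to cylinders. -/
structure IsCylinderMetric (α : Type*) [MetricSpace (ℕ → α)] : Prop where
  exists_dist_lt : ∃ ε > 0, ∀ x y : ℕ → α, dist x y < ε → x 0 = y 0
  exists_cylinder : ∀ ε > 0, ∃ q, ∀ x : ℕ → α, ∀ y ∈ cylinder x q, dist x y < ε

theorem isCylinderMetric_of_dist_eq (hdist : ∀ x y : ℕ → α, x ≠ y →
    dist x y = (2 : ℝ) ^ (-((1 + sInf {j : ℕ | x j ≠ y j} : ℕ) : ℤ))) : IsCylinderMetric α := by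
  constructor
  · refine ⟨1 / 2, by norm_num, fun x y hxy => by_contra fun hne => hxy.not_ge ?_⟩
    have hzero : sInf {j | x j ≠ y j} = 0 := Nat.sInf_eq_zero.2 (.inl hne)
    rw [hdist x y fun h => hne (congrFun h 0), hzero]
    norm_num
  · intro ε hε
    obtain ⟨q, hq⟩ := exists_pow_lt_of_lt_one hε (one_half_lt_one (α := ℝ))
    refine ⟨q, fun x y hy => ?_⟩
    rcases eq_or_ne x y with rfl | hne
    · rwa [dist_self]
    have hfirst : q ≤ sInf {j | x j ≠ y j} :=
      le_csInf (Function.ne_iff.1 hne) fun j hj => not_lt.1 fun hlt =>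
        hj (mem_cylinder_iff.1 hy j hlt).symm
    refine lt_of_le_of_lt ?_ hq
    rw [hdist x y hne, zpow_neg, zpow_natCast, ← inv_pow, one_div]
    exact pow_le_pow_of_le_one (by norm_num) (by norm_num) (by lia)

theorem dynBall_subset_cylinder (hε : ∀ x y : ℕ → α, dist x y < ε → x 0 = y 0) (n : ℕ)
    (x : ℕ → α) : dynBall leftShift n x ε ⊆ cylinder x n := fun y hy i hi => by
  simpa only [leftShift_iterate, zero_add] using (hε _ _ (hy i hi)).symm

theorem cylinder_subset_dynBall (hq : ∀ x : ℕ → α, ∀ y ∈ cylinder x q, dist x y < ε) (n : ℕ)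
    (x : ℕ → α) : cylinder x (n + q) ⊆ dynBall leftShift n x ε := fun y hy j hj => by
  rw [leftShift_iterate, leftShift_iterate]
  exact hq _ _ fun i hi => hy (i + j) (by lia)

theorem ballWeight_leftShift_eq (hε0 : 0 < ε) (hε : ∀ x y : ℕ → α, dist x y < ε → x 0 = y 0)
    (p : (ℕ → α) × ℕ) :
    ballWeight leftShift (fun n x => t * ℓ (wordPrefix x n)) a ε p =
      ENNReal.ofReal (Real.exp (-a * p.2 + t * ℓ (wordPrefix p.1 p.2))) := by
  have himage : (fun x => t * ℓ (wordPrefix x p.2)) '' dynBall leftShift p.2 p.1 ε =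
      {t * ℓ (wordPrefix p.1 p.2)} := by
    refine Set.Nonempty.subset_singleton_iff ?_ |>.1 ?_
    · exact ⟨_, p.1, fun j _ => by rwa [dist_self], rfl⟩
    · rintro _ ⟨y, hy, rfl⟩
      simp only [wordPrefix_eq_iff.2 (dynBall_subset_cylinder hε _ _ hy), mem_singleton_iff]
  rw [ballWeight, himage, csSup_singleton]

end Shift

section Transfer

variable {α : Type*} [MetricSpace (ℕ → α)] {ℓ : List α → ℝ} {b : List α → List α → List α}
  {u : ℕ → List α} {F : (ℕ → α) → ℕ → α} {Z : Set (ℕ → α)} {a ε η t K D E : ℝ} {k q L N : ℕ}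

/-- The set of parameters `z` whose image `F z` lies in the Bowen ball with center `p.1` and order
`p.2`, and whose insertion chain reaches the length `p.2` in the round after the first `j + 1`. -/
def preimageStage (b : List α → List α → List α) (u : ℕ → List α) (L : ℕ)
    (F : (ℕ → α) → ℕ → α) (ε : ℝ) (p : (ℕ → α) × ℕ) (j : ℕ) : Set (ℕ → α) :=
  {z | F z ∈ dynBall leftShift p.2 p.1 ε ∧
    (insertionChain b u L z (2 * (j + 1))).length ≤ p.2 ∧
    p.2 < (insertionChain b u L z (2 * (j + 2))).length}

/-- The Bowen balls have order `j * L`, one block less than the cylinders covering the stage, so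
that these cylinders lie in Bowen balls. -/
theorem exists_finset_cover_preimageStage (hb : ∀ w w', (b w w').length ≤ k)
    (hF : ∀ z, IsWordLimit (insertionChain b u L z) (F z))
    (hε : ∀ x y : ℕ → α, dist x y < ε → x 0 = y 0)
    (hq : ∀ x : ℕ → α, ∀ y ∈ cylinder x q, dist x y < ε) (hqL : q ≤ L) (p : (ℕ → α) × ℕ) (j : ℕ) :
    ∃ T : Finset (ℕ → α), ↑T ⊆ preimageStage b u L F ε p j ∧ T.card ≤ (k + 1) ^ (2 * (j + 1)) ∧
      preimageStage b u L F ε p j ⊆ ⋃ e ∈ T, dynBall leftShift (j * L) e ε := by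
  obtain ⟨T, hTS, hcard, hcover⟩ := exists_finset_cover_cylinder hb u L (j := j + 1)
    (w := wordPrefix p.1 p.2) (S := preimageStage b u L F ε p j) fun z hz => by
      rw [← hF z, ← wordPrefix_eq_iff.2 (dynBall_subset_cylinder hε _ _ hz.1)]
      exact wordPrefix_prefix _ hz.2.1
  refine ⟨T, hTS, hcard, hcover.trans (iUnion₂_mono fun e _ => ?_)⟩
  exact (cylinder_anti e (by lia)).trans (cylinder_subset_dynBall hq (j * L) e)

theorem bowenOuterMeasure_preimageStage_le (hb : ∀ w w', (b w w').length ≤ k)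
    (hF : ∀ z, IsWordLimit (insertionChain b u L z) (F z)) (hε0 : 0 < ε)
    (hε : ∀ x y : ℕ → α, dist x y < ε → x 0 = y 0)
    (hq : ∀ x : ℕ → α, ∀ y ∈ cylinder x q, dist x y < ε) (hqL : q ≤ L) {p : (ℕ → α) × ℕ} {j : ℕ}
    (hN : N ≤ j * L) (hE : ∀ z ∈ preimageStage b u L F ε p j,
      -a * (j * L : ℕ) + t * ℓ (wordPrefix z (j * L)) ≤
        -a * p.2 + t * ℓ (wordPrefix (F z) p.2) + E + j * D) :
    bowenOuterMeasure leftShift (fun n x => t * ℓ (wordPrefix x n)) (a + η) ε N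
        (preimageStage b u L F ε p j) ≤
      ENNReal.ofReal ((k + 1) ^ (2 * (j + 1)) * Real.exp (E + j * (D - η * L))) *
        ballWeight leftShift (fun n x => t * ℓ (wordPrefix x n)) a ε p := by
  set Φ : ℕ → (ℕ → α) → ℝ := fun n x => t * ℓ (wordPrefix x n)
  obtain ⟨T, hTS, hcard, hcover⟩ := exists_finset_cover_preimageStage hb hF hε hq hqL p j
  have hweight : ∀ e ∈ T, ballWeight leftShift Φ (a + η) ε (e, j * L) ≤
      ENNReal.ofReal (Real.exp (E + j * (D - η * L))) * ballWeight leftShift Φ a ε p := by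
    intro e he
    have hexp := hE e (hTS he)
    rw [wordPrefix_eq_iff.2 (dynBall_subset_cylinder hε _ _ (hTS he).1)] at hexp
    rw [ballWeight_leftShift_eq hε0 hε, ballWeight_leftShift_eq hε0 hε,
      ← ENNReal.ofReal_mul (Real.exp_pos _).le, ← Real.exp_add]
    refine ENNReal.ofReal_le_ofReal (Real.exp_le_exp.2 ?_)
    push_cast at hexp ⊢
    linarith
  calc bowenOuterMeasure leftShift Φ (a + η) ε N (preimageStage b u L F ε p j)
    _ ≤ bowenOuterMeasure leftShift Φ (a + η) ε N (⋃ e ∈ T, dynBall leftShift (j * L) e ε) :=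
      measure_mono hcover
    _ ≤ ∑ e ∈ T, ballWeight leftShift Φ (a + η) ε (e, j * L) :=
      (measure_biUnion_finset_le T _).trans <| Finset.sum_le_sum fun e _ =>
        bowenOuterMeasure_dynBall_le (p := (e, j * L)) hN
    _ ≤ T.card * (ENNReal.ofReal (Real.exp (E + j * (D - η * L))) * ballWeight leftShift Φ a ε p) :=
      (Finset.sum_le_card_nsmul T _ _ hweight).trans_eq (nsmul_eq_mul _ _)
    _ ≤ ENNReal.ofReal ((k + 1) ^ (2 * (j + 1)) * Real.exp (E + j * (D - η * L))) *
        ballWeight leftShift Φ a ε p := by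
      rw [← mul_assoc, ENNReal.ofReal_mul (by positivity)]
      gcongr
      rw [← ENNReal.ofReal_natCast]
      exact ENNReal.ofReal_le_ofReal (by exact_mod_cast hcard)

theorem preimage_dynBall_subset_iUnion_preimageStage (hu : IsSparse ℓ u)
    (hb : ∀ w w', (b w w').length ≤ k) (hL : 0 < L) {p : (ℕ → α) × ℕ} (hp : L + 2 * k + 1 ≤ p.2) :
    F ⁻¹' dynBall leftShift p.2 p.1 ε ⊆ ⋃ j, preimageStage b u L F ε p j := fun z hz => by
  have hround : (insertionChain b u L z 2).length ≤ p.2 := by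
    simpa only [one_mul] using (hu.length_insertionChain_le hb 1).trans (by rwa [one_mul])
  obtain ⟨j, hj⟩ := exists_length_insertionChain_between hL hround
  exact mem_iUnion.2 ⟨j, hz, hj⟩

theorem exists_block_length (c D : ℝ) (hη : 0 < η) (q : ℕ) :
    ∃ L : ℕ, 0 < L ∧ q ≤ L ∧ c * Real.exp (D - η * L) < 1 := by
  have hlim : Tendsto (fun L : ℕ => c * Real.exp (D - η * L)) atTop (𝓝 (c * 0)) := by
    refine (Real.tendsto_exp_atBot.comp ?_).const_mul c
    simp only [sub_eq_add_neg]
    exact tendsto_atBot_add_const_left _ _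
      (tendsto_neg_atTop_atBot.comp (tendsto_natCast_atTop_atTop.const_mul_atTop hη))
  rw [mul_zero] at hlim
  exact ((eventually_gt_atTop 0).and ((eventually_ge_atTop q).and
    (hlim.eventually_lt_const one_pos))).exists

theorem tsum_ofReal_stage_ne_top (hL : ((k : ℝ) + 1) ^ 2 * Real.exp (D - η * L) < 1) (E : ℝ) :
    ∑' j : ℕ, ENNReal.ofReal ((k + 1) ^ (2 * (j + 1)) * Real.exp (E + j * (D - η * L))) ≠ ⊤ := by
  refine Summable.tsum_ofReal_ne_top (((summable_geometric_of_lt_one (by positivity) hL).mul_left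
    ((k + 1) ^ 2 * Real.exp E)).congr fun j => ?_)
  rw [Real.exp_add, Real.exp_nat_mul, mul_pow, ← pow_mul, mul_add, pow_add]
  ring

theorem IsQuasiAdditive.mcal_univ_eq_zero [Finite α] (h : IsQuasiAdditive ℓ b k K)
    (hu : IsSparse ℓ u)
    (hZ : ∀ L, 0 < L → ∀ z x, IsWordLimit (insertionChain b u L z) x → x ∈ Z) (hε0 : 0 < ε)
    (hε : ∀ x y : ℕ → α, dist x y < ε → x 0 = y 0)
    (hq : ∀ x : ℕ → α, ∀ y ∈ cylinder x q, dist x y < ε) (ht : 0 ≤ t) (hη : 0 < η)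
    (ha : mcal leftShift (fun n x => t * ℓ (wordPrefix x n)) Z a ε = 0) :
    mcal leftShift (fun n x => t * ℓ (wordPrefix x n)) univ (a + η) ε = 0 := by
  have hb := h.length_bridge_le
  obtain ⟨D, hD⟩ := h.exists_exponent_bound hu a ht
  obtain ⟨L, hL, hqL, hsmall⟩ := exists_block_length (((k : ℝ) + 1) ^ 2) D hη q
  obtain ⟨E, hE⟩ := hD L
  choose F hF using exists_isWordLimit_insertionChain b u hL
  refine mcal_eq_zero_of_preimage (F := F) (fun z _ => hZ L hL z _ (hF z))
    (tsum_ofReal_stage_ne_top hsmall E) (fun N => ⟨(N + 2) * (L + 2 * k + 1), fun p hp => ?_⟩) ha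
  refine (measure_mono (preimage_dynBall_subset_iUnion_preimageStage hu hb hL (by lia))).trans <|
    (measure_iUnion_le _).trans ?_
  rw [mul_comm, ← ENNReal.tsum_mul_right]
  refine ENNReal.tsum_le_tsum fun j => ?_
  rcases (preimageStage b u L F ε p j).eq_empty_or_nonempty with hj | ⟨z, hz⟩
  · simp [hj]
  have hNj : N < j := by
    have := hp.trans_lt (hz.2.2.trans_le (hu.length_insertionChain_le hb (j + 2)))
    have := lt_of_mul_lt_mul_right' this
    lia
  refine bowenOuterMeasure_preimageStage_le hb hF hε0 hε hq hqL
    (hNj.le.trans (Nat.le_mul_of_pos_right j hL)) fun z hz => hE z _ _ j (hF z) ?_ hz.2.2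
  exact (gluedWord_prefix (by lia)).length_le.trans hz.2.1

end Transfer

section IrregularSet

theorem iInter_irregularSet_const_mul {X : Type*} [MetricSpace X] (Φ : ℕ → X → ℝ) :
    ⋂ s ∈ Ioi (0 : ℝ), irregularSet (fun n x => s * Φ n x) = irregularSet Φ := by
  refine Subset.antisymm ?_ (subset_iInter₂ fun s hs x hx ⟨c, hc⟩ => hx ⟨s⁻¹ * c, ?_⟩)
  · exact iInter₂_subset_of_subset 1 (mem_Ioi.2 one_pos) (by simp only [one_mul, subset_rfl])
  refine (hc.const_mul s⁻¹).congr fun n => ?_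
  rw [← mul_div_assoc, inv_mul_cancel_left₀ (ne_of_gt hs)]

theorem IsQuasiAdditive.aaPressure_irregularSet_eq_univ {α : Type*} [Finite α]
    [MetricSpace (ℕ → α)] (hα : IsCylinderMetric α) {ℓ : List α → ℝ}
    {b : List α → List α → List α} {k : ℕ} {K t : ℝ} (h : IsQuasiAdditive ℓ b k K)
    (hirr : (irregularSet fun n (x : ℕ → α) => ℓ (wordPrefix x n)).Nonempty) (ht : 0 ≤ t) :
    aaPressure leftShift (fun n x => t * ℓ (wordPrefix x n))
        (irregularSet fun n x => ℓ (wordPrefix x n)) =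
      aaPressure leftShift (fun n x => t * ℓ (wordPrefix x n)) univ := by
  obtain ⟨x, hx⟩ := hirr
  obtain ⟨u, hu, hdefect⟩ := exists_isSparse_not_isLittleO h.map_nil hx
  obtain ⟨ε₀, hε₀, hletter⟩ := hα.exists_dist_lt
  refine limsup_congr ?_
  filter_upwards [Ioc_mem_nhdsGT hε₀] with ε hε
  obtain ⟨q, hq⟩ := hα.exists_cylinder ε hε.1
  refine le_antisymm (aaPressureAt_mono (subset_univ _))
    (aaPressureAt_le_of_forall_lt fun a r har ha => ?_)
  rw [← add_sub_cancel a r]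
  exact h.mcal_univ_eq_zero hu (fun L hL z x hx =>
      h.not_tendsto_of_isWordLimit_insertionChain hu hdefect hL hx) hε.1
    (fun x y hxy => hletter x y (hxy.trans_le hε.2)) hq ht (sub_pos.2 har) ha

end IrregularSet

section MatrixCocycle

variable {α R : Type*} [NormedRing R] [NormOneClass R] {M : α → R} {C : ℝ} {k : ℕ}

theorem exists_isQuasiAdditive_log_norm_prod (hnz : ∀ w : List α, w ≠ [] → (w.map M).prod ≠ 0)
    (hC : 0 < C) (hquasi : ∀ w w' : List α, ∃ wb : List α, wb.length ≤ k ∧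
      C * ‖(w.map M).prod‖ * ‖(w'.map M).prod‖ ≤ ‖((w ++ wb ++ w').map M).prod‖) :
    ∃ b, IsQuasiAdditive (fun w => Real.log ‖(w.map M).prod‖) b k (-Real.log C) := by
  have hnorm (w : List α) : ‖(w.map M).prod‖ ≠ 0 := by
    rcases eq_or_ne w [] with rfl | hw
    · simp
    · exact norm_ne_zero_iff.2 (hnz w hw)
  choose b hlength hbridge using hquasi
  refine ⟨b, by simp, fun w w' => ?_, hlength, fun w w' => ?_⟩
  · rw [← Real.log_mul (hnorm w) (hnorm w')]
    refine Real.log_le_log ((norm_nonneg _).lt_of_ne' (hnorm _)) ?_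
    rw [List.map_append, List.prod_append]
    exact norm_mul_le _ _
  · have hpos : 0 < C * ‖(w.map M).prod‖ * ‖(w'.map M).prod‖ := by
      have := hnorm w
      have := hnorm w'
      positivity
    have hlog := Real.log_le_log hpos (hbridge w w')
    rw [Real.log_mul (mul_ne_zero hC.ne' (hnorm w)) (hnorm w'),
      Real.log_mul hC.ne' (hnorm w)] at hlog
    linarith

theorem shift_matrix_cocycle_irregular_full_pressure_general [Finite α] [MetricSpace (ℕ → α)]
    (hα : IsCylinderMetric α) (hnz : ∀ w : List α, w ≠ [] → (w.map M).prod ≠ 0)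
    (hC : 0 < C) (hquasi : ∀ w w' : List α, ∃ wb : List α, wb.length ≤ k ∧
      C * ‖(w.map M).prod‖ * ‖(w'.map M).prod‖ ≤ ‖((w ++ wb ++ w').map M).prod‖)
    (hirr : (irregularSet fun n (x : ℕ → α) =>
      Real.log ‖(List.ofFn fun i : Fin n => M (x i)).prod‖).Nonempty) {t : ℝ} (ht : 0 ≤ t) :
    aaPressure leftShift (fun n x => t * Real.log ‖(List.ofFn fun i : Fin n => M (x i)).prod‖)
        (⋂ s ∈ Ioi (0 : ℝ), irregularSet fun n x =>
          s * Real.log ‖(List.ofFn fun i : Fin n => M (x i)).prod‖) =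
      aaPressure leftShift (fun n x => t * Real.log ‖(List.ofFn fun i : Fin n => M (x i)).prod‖)
        univ := by
  obtain ⟨b, hb⟩ := exists_isQuasiAdditive_log_norm_prod hnz hC hquasi
  have hword (x : ℕ → α) (n : ℕ) :
      (List.ofFn fun i : Fin n => M (x i)) = (wordPrefix x n).map M := List.map_ofFn.symm
  rw [iInter_irregularSet_const_mul]
  simp only [hword] at hirr ⊢
  exact hb.aaPressure_irregularSet_eq_univ hα hirr ht

end MatrixCocycle

/-- For the shift on `{1, …, m}^ℕ` with the metric
`d(x,y) = 2^{-min{j ≥ 1 : x_j ≠ y_j}}` and a quasi-multiplicative family of nonzero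
matrix products, if the irregular set of `Φ¹` is nonempty then for every `t ≥ 0` the
common irregular set `⋂_{s>0} I(Φˢ, σ)` carries full pressure for `Φᵗ`, where
`φᵗ_n(x) = t·log‖M_{x_1}⋯M_{x_n}‖`. -/
theorem shift_matrix_cocycle_irregular_full_pressure
    (m d : ℕ) (hm : 2 ≤ m) [MetricSpace (ℕ → Fin m)]
    (hdist : ∀ x y : ℕ → Fin m, x ≠ y →
      dist x y = (2 : ℝ) ^ (-((1 + sInf {j : ℕ | x j ≠ y j} : ℕ) : ℤ)))
    (Mat : Fin m → ((Fin d → ℂ) →L[ℂ] (Fin d → ℂ)))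
    (hnz : ∀ w : List (Fin m), w ≠ [] → (w.map Mat).prod ≠ 0)
    (C : ℝ) (hC : 0 < C) (k : ℕ)
    (hquasi : ∀ w w' : List (Fin m), ∃ wb : List (Fin m), wb.length ≤ k ∧
      C * ‖(w.map Mat).prod‖ * ‖(w'.map Mat).prod‖ ≤ ‖((w ++ wb ++ w').map Mat).prod‖)
    (hirr : (irregularSet (fun n (x : ℕ → Fin m) =>
      (1 : ℝ) * Real.log ‖(List.ofFn fun i : Fin n => Mat (x i)).prod‖)).Nonempty)
    (t : ℝ) (ht : 0 ≤ t) :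
    aaPressure (fun (x : ℕ → Fin m) j => x (j + 1))
        (fun n x => t * Real.log ‖(List.ofFn fun i : Fin n => Mat (x i)).prod‖)
        (⋂ s ∈ Set.Ioi (0 : ℝ), irregularSet (fun n (x : ℕ → Fin m) =>
          s * Real.log ‖(List.ofFn fun i : Fin n => Mat (x i)).prod‖)) =
      aaPressure (fun (x : ℕ → Fin m) j => x (j + 1))
        (fun n x => t * Real.log ‖(List.ofFn fun i : Fin n => Mat (x i)).prod‖)
        Set.univ := by
  have : Nontrivial (Fin d → ℂ) := by
    by_contra htriv
    rw [not_nontrivial_iff_subsingleton] at htriv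
    exact hnz [⟨0, by lia⟩] (List.cons_ne_nil _ _) (Subsingleton.elim _ _)
  exact shift_matrix_cocycle_irregular_full_pressure_general (isCylinderMetric_of_dist_eq hdist)
    hnz hC hquasi (by simpa only [one_mul] using hirr) ht
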